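/- For every real number x > 0, the double inequality ln(x + 1/2) − 1/x < ψ(x) < ln(x + e^{−γ}) − 1/x holds, where γ is the Euler–Mascheroni constant. -/

import Mathlib

/-!
Since `ψ(x + 1) = ψ(x) + 1/x`, the claim is `log (x + 1/2) < ψ(x + 1) < log (x + e^{-γ})`, where
`e^{-γ} = e^{ψ(1)}`. Every inequality about `ψ` is obtained by the same telescoping device
(`pos_of_antitone_of_log_bound`): the defect `d n` of the inequality at the arguments shifted by
`n` is strictly decreasing and tends to `0`, hence `d 0 > 0`. The limit comes from
`log (x - 1) ≤ ψ(x) ≤ log x`, a consequence of the log-convexity of `Γ`; the monotonicity of `d` is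
an elementary inequality because `ψ(x + 1) - ψ(x) = 1/x`.

* Lower bound: the elementary inequality is `1/(x + 1) < log ((x + 3/2)/(x + 1/2))`.
* `ψ(y) < -log (e^{1/y} - 1)`: it is `2 < e^{-1/y} + e^{1/(y+1)}`, which follows by differentiation
  from `2 log w < w - 1/w` for `w > 1`.
* `ψ(1 + h) < log (e^{ψ(1)} + h)` for `h > 0`, the upper bound: with `a = e^{ψ(y)}` it is
  `a e^{1/y} + h < e^{1/(y+h)} (a + h)`, which follows from the previous bound
  `a (e^{1/y} - 1) < 1` and the fact that `1/s - 1/(e^s - 1)` decreases on `s > 0`.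
-/

open Real

/-- The digamma function `ψ = Γ′/Γ`. -/
noncomputable def digamma (x : ℝ) : ℝ := deriv Real.Gamma x / Real.Gamma x

open Set Filter Topology

/-! ### The digamma function -/

lemma differentiableAt_Gamma_of_pos {x : ℝ} (hx : 0 < x) : DifferentiableAt ℝ Real.Gamma x :=
  differentiableAt_Gamma fun m ↦ ((neg_nonpos.mpr m.cast_nonneg).trans_lt hx).ne'

lemma digamma_eq_deriv {x : ℝ} (hx : 0 < x) : digamma x = deriv (log ∘ Real.Gamma) x := by
  rw [Function.comp_def, deriv.log (differentiableAt_Gamma_of_pos hx) (Gamma_pos_of_pos hx).ne',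
    digamma]

lemma digamma_add_one {x : ℝ} (hx : 0 < x) : digamma (x + 1) = digamma x + 1 / x := by
  have hG := (Gamma_pos_of_pos hx).ne'
  have h : deriv Real.Gamma (x + 1) = Real.Gamma x + x * deriv Real.Gamma x := by
    rw [← deriv_comp_add_const]
    have h1 : (fun y ↦ Real.Gamma (y + 1)) =ᶠ[𝓝 x] fun y ↦ y * Real.Gamma y := by
      filter_upwards [eventually_gt_nhds hx] with y hy using Gamma_add_one hy.ne'
    rw [h1.deriv_eq]
    have h2 := ((hasDerivAt_id' x).fun_mul (differentiableAt_Gamma_of_pos hx).hasDerivAt).deriv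
    rw [h2, one_mul]
  rw [digamma, digamma, h, Gamma_add_one hx.ne']
  field_simp
  ring

lemma digamma_one : digamma 1 = -eulerMascheroniConstant := by
  rw [digamma, hasDerivAt_Gamma_one.deriv, Gamma_one, div_one]

lemma log_Gamma_add_one {x : ℝ} (hx : 0 < x) :
    (log ∘ Real.Gamma) (x + 1) = (log ∘ Real.Gamma) x + log x := by
  simp only [Function.comp_apply, Gamma_add_one hx.ne', log_mul hx.ne' (Gamma_pos_of_pos hx).ne',
    add_comm]

lemma differentiableAt_log_Gamma {x : ℝ} (hx : 0 < x) :
    DifferentiableAt ℝ (log ∘ Real.Gamma) x :=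
  (differentiableAt_Gamma_of_pos hx).log (Gamma_pos_of_pos hx).ne'

lemma log_le_digamma_add_one {x : ℝ} (hx : 0 < x) : log x ≤ digamma (x + 1) := by
  rw [digamma_eq_deriv (by positivity)]
  refine (le_of_eq ?_).trans <| convexOn_log_Gamma.slope_le_deriv (mem_Ioi.mpr hx)
    (mem_Ioi.mpr (by positivity : 0 < x + 1)) (by linarith)
    (differentiableAt_log_Gamma (by positivity))
  rw [slope_def_field, log_Gamma_add_one hx]
  ring

lemma digamma_le_log {x : ℝ} (hx : 0 < x) : digamma x ≤ log x := by
  rw [digamma_eq_deriv hx]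
  refine (convexOn_log_Gamma.deriv_le_slope (mem_Ioi.mpr hx)
    (mem_Ioi.mpr (by positivity : 0 < x + 1)) (by linarith)
    (differentiableAt_log_Gamma hx)).trans (le_of_eq ?_)
  rw [slope_def_field, log_Gamma_add_one hx]
  ring

/-! ### Telescoping -/

/-- A strictly decreasing sequence is positive as soon as it is bounded below by a sequence tending
to `0`, here `log (n + c) - log (n + c + 1)`. -/
lemma pos_of_antitone_of_log_bound {d : ℕ → ℝ} {c : ℝ}
    (hd : ∀ n, d (n + 1) < d n)
    (hb : ∀ n : ℕ, log (n + c) - log (n + c + 1) ≤ d (n + 1)) : 0 < d 0 := by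
  have hanti : StrictAnti d := strictAnti_nat_of_succ_lt hd
  have hlim : Tendsto (fun n : ℕ ↦ log (n + c) - log (n + c + 1)) atTop (𝓝 0) := by
    have h1 : Tendsto (fun n : ℕ ↦ (n : ℝ) + c) atTop atTop :=
      tendsto_atTop_add_const_right _ _ tendsto_natCast_atTop_atTop
    have h2 := (tendsto_log_comp_add_sub_log 1).comp h1
    simpa using h2.neg
  have h1 : 0 ≤ d 1 := by
    refine le_of_tendsto hlim (Eventually.of_forall fun n ↦ (hb n).trans ?_)
    exact hanti.antitone (by omega)
  exact h1.trans_lt (hd 0)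

/-! ### Elementary inequalities -/

lemma two_mul_log_lt {w : ℝ} (hw : 1 < w) : 2 * log w < w - w⁻¹ := by
  have h := self_lt_sinh_iff.mpr (log_pos hw)
  rw [sinh_log (by linarith)] at h
  linarith

lemma two_lt_exp_add_exp {s : ℝ} (hs : 0 < s) : 2 < exp (-s) + exp (s / (1 + s)) := by
  have hderiv : ∀ t : ℝ, 0 ≤ t → HasDerivAt (fun t ↦ exp (-t) + exp (t / (1 + t)))
      (-exp (-t) + exp (t / (1 + t)) / (1 + t) ^ 2) t := by
    intro t ht
    have h1 : 1 + t ≠ 0 := by positivity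
    have h := (hasDerivAt_neg t).exp.add
      (((hasDerivAt_id t).div ((hasDerivAt_id t).const_add 1) h1).exp)
    refine h.congr_deriv ?_
    simp only [Pi.div_apply, id_eq]
    ring
  have hmono : StrictMonoOn (fun t ↦ exp (-t) + exp (t / (1 + t))) (Ici 0) := by
    refine strictMonoOn_of_deriv_pos (convex_Ici 0)
      (fun t ht ↦ (hderiv t ht).continuousAt.continuousWithinAt) fun t ht ↦ ?_
    rw [interior_Ici, mem_Ioi] at ht
    rw [(hderiv t ht.le).deriv]
    have hl := two_mul_log_lt (w := 1 + t) (by linarith)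
    have hp : 0 < 1 + t := by positivity
    have he : exp (-t) < exp (t / (1 + t) - 2 * log (1 + t)) := by
      apply exp_lt_exp.mpr
      have : t / (1 + t) = 1 - (1 + t)⁻¹ := by field_simp; ring
      linarith
    rw [exp_sub, two_mul, exp_add, exp_log hp, ← sq] at he
    linarith
  have := hmono (mem_Ici.mpr le_rfl) (mem_Ici.mpr hs.le) hs
  simp only [neg_zero, zero_div, exp_zero] at this
  linarith

lemma inv_sub_inv_exp_sub_one_strictAntiOn :
    StrictAntiOn (fun s : ℝ ↦ s⁻¹ - (exp s - 1)⁻¹) (Ioi 0) := by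
  have hpos : ∀ s : ℝ, 0 < s → 0 < exp s - 1 := fun s hs ↦ sub_pos.mpr (one_lt_exp_iff.mpr hs)
  have hderiv : ∀ s : ℝ, 0 < s → HasDerivAt (fun s : ℝ ↦ s⁻¹ - (exp s - 1)⁻¹)
      (-(s ^ 2)⁻¹ - -exp s / (exp s - 1) ^ 2) s := fun s hs ↦
    (hasDerivAt_inv hs.ne').sub (((hasDerivAt_exp s).sub_const 1).inv (hpos s hs).ne')
  refine strictAntiOn_of_deriv_neg (convex_Ioi 0)
    (fun t ht ↦ (hderiv t ht).continuousAt.continuousWithinAt) fun s hs ↦ ?_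
  rw [interior_Ioi, mem_Ioi] at hs
  rw [(hderiv s hs).deriv]
  -- The claim is `s² e^s < (e^s - 1)²`, that is `s / 2 < sinh (s / 2)`.
  have hsinh := self_lt_sinh_iff.mpr (half_pos hs)
  rw [sinh_eq, exp_neg] at hsinh
  have hE : exp s = exp (s / 2) ^ 2 := by rw [← exp_nat_mul]; congr 1; push_cast; ring
  have hq := exp_pos (s / 2)
  have h1 : s * exp (s / 2) < exp s - 1 := by
    have := mul_lt_mul_of_pos_right hsinh hq
    rw [div_mul_eq_mul_div, div_mul_eq_mul_div, sub_mul, inv_mul_cancel₀ hq.ne'] at this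
    rw [hE]; linarith
  have h2 : s ^ 2 * exp s < (exp s - 1) ^ 2 := by
    have := pow_lt_pow_left₀ h1 (by positivity) two_ne_zero
    rwa [mul_pow, ← hE] at this
  have h3 : exp s / (exp s - 1) ^ 2 < (s ^ 2)⁻¹ := by
    rw [div_lt_iff₀ (pow_pos (hpos s hs) 2), ← div_eq_inv_mul, lt_div_iff₀ (by positivity)]
    linarith
  rw [neg_div]
  linarith

/-! ### Bounds for the digamma function -/

lemma log_add_half_lt_digamma_add_one {x : ℝ} (hx : 0 < x) :
    log (x + 1 / 2) < digamma (x + 1) := by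
  have key := pos_of_antitone_of_log_bound
    (d := fun n : ℕ ↦ digamma (x + n + 1) - log (x + n + 1 / 2)) (c := x + 1) ?_ ?_
  · simpa using key
  · intro n
    have hn : (0 : ℝ) ≤ n := n.cast_nonneg
    have hz : 0 < x + n + 1 / 2 := by positivity
    have h := lt_log_one_add_of_pos (x := 1 / (x + n + 1 / 2)) (by positivity)
    have h1 : 2 * (1 / (x + n + 1 / 2)) / (1 / (x + n + 1 / 2) + 2) = 1 / (x + n + 1) := by
      field_simp; ring
    have h2 : 1 + 1 / (x + n + 1 / 2) = (x + n + 1 + 1 / 2) / (x + n + 1 / 2) := by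
      field_simp; ring
    rw [h1, h2, log_div (by positivity) (by positivity)] at h
    have h3 := digamma_add_one (x := x + n + 1) (by positivity)
    push_cast
    rw [← add_assoc x, h3]
    linarith
  · intro n
    have hn : (0 : ℝ) ≤ n := n.cast_nonneg
    have h1 := log_le_digamma_add_one (x := x + n + 1) (by positivity)
    have h2 : log (x + n + 1 + 1 / 2) ≤ log (n + (x + 1) + 1) :=
      log_le_log (by positivity) (by linarith)
    push_cast
    rw [← add_assoc x, show (n : ℝ) + (x + 1) = x + n + 1 by ring] at *
    linarith

/-- The function `e^ψ` increases by less than `1` over a unit step: by the recurrence for `ψ` the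
left side is `e^{ψ(y+1)} - e^{ψ(y)}`. -/
lemma exp_digamma_mul_lt_one {y : ℝ} (hy : 0 < y) :
    exp (digamma y) * (exp (1 / y) - 1) < 1 := by
  have hpos : ∀ z : ℝ, 0 < z → 0 < exp (1 / z) - 1 := fun z hz ↦
    sub_pos.mpr (one_lt_exp_iff.mpr (by positivity))
  have key := pos_of_antitone_of_log_bound
    (d := fun n : ℕ ↦ -log (exp (1 / (y + n)) - 1) - digamma (y + n)) (c := y) ?_ ?_
  · simp only [Nat.cast_zero, add_zero] at key
    have h : digamma y + log (exp (1 / y) - 1) < 0 := by linarith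
    have := exp_lt_exp.mpr h
    rwa [exp_add, exp_log (hpos y hy), exp_zero] at this
  · intro n
    push_cast
    rw [← add_assoc]
    have hz : 0 < y + n := by positivity
    generalize y + (n : ℝ) = z at hz
    have h := two_lt_exp_add_exp (s := 1 / z) (by positivity)
    have h1 : 1 / z / (1 + 1 / z) = 1 / (z + 1) := by field_simp
    rw [h1, exp_neg] at h
    have h2 : exp (1 / z) - 1 < exp (1 / z) * (exp (1 / (z + 1)) - 1) := by
      have := mul_lt_mul_of_pos_left h (exp_pos (1 / z))
      rw [mul_add, mul_inv_cancel₀ (exp_pos _).ne'] at this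
      linarith
    have h3 := log_lt_log (hpos z hz) h2
    rw [log_mul (exp_pos _).ne' (hpos (z + 1) (by positivity)).ne', log_exp] at h3
    rw [digamma_add_one hz]
    linarith
  · intro n
    push_cast
    rw [← add_assoc, add_comm (n : ℝ) y]
    have hz : 0 < y + n := by positivity
    generalize y + (n : ℝ) = z at hz
    have h1 := digamma_le_log (x := z + 1) (by positivity)
    have h2 : exp (1 / (z + 1)) - 1 ≤ z⁻¹ := by
      -- `e^{-t} ≥ 1 - t` at `t = 1/(z+1)` gives `e^t ≤ (z+1)/z`.
      have h := add_one_le_exp (-(1 / (z + 1)))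
      rw [exp_neg, show -(1 / (z + 1)) + 1 = ((z + 1) / z)⁻¹ by field_simp; ring,
        inv_le_inv₀ (by positivity) (exp_pos _)] at h
      have : (z + 1) / z = 1 + z⁻¹ := by field_simp
      linarith
    have h3 := log_le_log (hpos (z + 1) (by positivity)) h2
    rw [log_inv] at h3
    linarith

lemma digamma_add_lt {y h : ℝ} (hy : 0 < y) (hh : 0 < h) :
    digamma (y + h) < log (exp (digamma y) + h) := by
  have key := pos_of_antitone_of_log_bound
    (d := fun n : ℕ ↦ log (exp (digamma (y + n)) + h) - digamma (y + n + h)) (c := y + h)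
    ?_ ?_
  · simpa using key
  · intro n
    push_cast
    rw [← add_assoc]
    have hz : 0 < y + n := by positivity
    generalize y + (n : ℝ) = z at hz
    have ha := exp_digamma_mul_lt_one hz
    rw [add_right_comm, digamma_add_one (x := z + h) (by positivity), digamma_add_one hz, exp_add]
    have hapos := exp_pos (digamma z)
    generalize exp (digamma z) = a at ha hapos
    have hP : 0 < exp (1 / (z + h)) - 1 := sub_pos.mpr (one_lt_exp_iff.mpr (by positivity))
    have hS : 0 < exp (1 / z) - 1 := sub_pos.mpr (one_lt_exp_iff.mpr (by positivity))
    have hB := inv_sub_inv_exp_sub_one_strictAntiOn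
      (mem_Ioi.mpr (by positivity : 0 < 1 / (z + h))) (mem_Ioi.mpr (by positivity : 0 < 1 / z))
      (one_div_lt_one_div_of_lt hz (by linarith))
    simp only [one_div, inv_inv] at hB hP hS ha ⊢
    have hE : a * exp z⁻¹ + h < exp (z + h)⁻¹ * (a + h) := by
      generalize hPd : exp (z + h)⁻¹ - 1 = P at *
      generalize hSd : exp z⁻¹ - 1 = S at *
      rw [show exp (z + h)⁻¹ = P + 1 by linarith, show exp z⁻¹ = S + 1 by linarith]
      -- The monotonicity fact reads `1/P - 1/S < h`; multiply by `P S` and use `a S < 1`.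
      have h1 : S - P < h * (P * S) := by
        have h0 : P⁻¹ - S⁻¹ < h := by linarith
        have := mul_lt_mul_of_pos_right h0 (mul_pos hP hS)
        have h2 : (P⁻¹ - S⁻¹) * (P * S) = S - P := by field_simp
        linarith
      have h2 : a * (S - P) < h * P := by
        have h3 := mul_lt_mul_of_pos_left h1 hapos
        have h4 := mul_lt_mul_of_pos_left ha (mul_pos hh hP)
        linarith
      linarith
    have hl := log_lt_log (by positivity) hE
    rw [log_mul (exp_pos _).ne' (by positivity), log_exp] at hl
    linarith
  · intro n
    push_cast
    rw [← add_assoc y, show (n : ℝ) + (y + h) = y + n + h by ring]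
    have hz : 0 < y + n := by positivity
    generalize y + (n : ℝ) = z at hz
    have h1 := log_le_digamma_add_one hz
    rw [log_le_iff_le_exp hz] at h1
    have h2 := digamma_le_log (x := z + h + 1) (by positivity)
    have h3 : log (z + h) ≤ log (exp (digamma (z + 1)) + h) :=
      log_le_log (by positivity) (by linarith)
    rw [add_right_comm z 1 h]
    linarith

theorem stmt_13 (x : ℝ) (hx : 0 < x) :
    Real.log (x + 1/2) - 1 / x < digamma x ∧
      digamma x < Real.log (x + Real.exp (-Real.eulerMascheroniConstant)) - 1 / x := by
  have h0 := digamma_add_one hx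
  have h1 := log_add_half_lt_digamma_add_one hx
  have h2 := digamma_add_lt one_pos hx
  rw [digamma_one, add_comm 1 x, add_comm _ x] at h2
  constructor <;> linarith
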